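/- arXiv:0909.5216 — 2 statements merged into one kernel-verified Lean document; each statement's English description precedes it below -/
import Mathlib

section
/- Let d ≥ 4 and let ρ₁,…,ρ_{d−1} satisfy ρcrit > |ρ₁| ≥ |ρ₂| ≥ … ≥ |ρ_{d−1}| > 0, where ρcrit = 0.63055. Let C* be the path on vertices v₁,…,v_d with correlation ρ_i on the edge {v_i, v_{i+1}} for each i (correlations arranged in decreasing order of magnitude). Then C* is the easiest model to learn: for every tree T on d vertices and every arrangement π of (ρ₁,…,ρ_{d−1}) on T, K̃(T, π) ≤ K̃(C*) = min over 1 ≤ i ≤ d−2 of W(ρ_i, ρ_{i+1}). -/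
/-! In the squared correlations `x = a²`, `y = b²` and with `t = 1 / (1 - x) - 1 / (1 - y)`, the
denominator of `J̃(a, b)` is `2t(2t + 1)`. Two monotonicity facts follow by differentiating:
`J̃(a, b)` decreases in `|b|` on `|b| < |a|` (`rate_anti`), and `J̃(a, r a)` increases in `|a|` for
fixed `r` as long as `|a| ≤ |r| < 0.63055` (`rate_mono`, `Jt_mul_mono`).

By the first fact, the minimum defining `K̃` is controlled by paths of length two (`exists_W_le`),
so that `K̃(C*)` is the least of the weights `W(ρ_i, ρ_{i+1})` of adjacent edges of the chain.

Given a tree `T` with an arrangement and an index `i`, connectedness provides a vertex meeting an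
edge of index `k ≤ i` and an edge of index `l ≥ i + 1` (`exists_separated_edges`). The two edges
span a non-edge of `T`, whence `K̃(T, π) ≤ W(ρ_k, ρ_l)`, and `W_le_W` gives
`W(ρ_k, ρ_l) ≤ W(ρ_i, ρ_{i+1})`. In that last step, with `|ρ_l| ≤ |ρ_{i+1}| ≤ |ρ_i| ≤ |ρ_k|`, one
first has `W(ρ_k, ρ_l) ≤ J̃(ρ_l, ρ_kρ_l) ≤ J̃(ρ_l, ρ_iρ_l)`, which is at most
`J̃(ρ_{i+1}, ρ_iρ_{i+1})` by the second fact, and at most `J̃(ρ_i, ρ_i²) ≤ J̃(ρ_i, ρ_iρ_{i+1})` by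
both. Monotonicity of `J̃(a, b)` in `|a|` for fixed `b` is avoided: it fails slightly below
`0.63055` when `b` is near `0`. -/

noncomputable def Jt (a b : ℝ) : ℝ :=
  ((1 / 2) * Real.log ((1 - b ^ 2) / (1 - a ^ 2))) ^ 2 /
    (2 * (b ^ 4 + b ^ 2) / (1 - b ^ 2) ^ 2 + 2 * (a ^ 4 + a ^ 2) / (1 - a ^ 2) ^ 2
      - 4 * b ^ 2 * (a ^ 2 + 1) / ((1 - b ^ 2) * (1 - a ^ 2)))

noncomputable def W (a b : ℝ) : ℝ := min (Jt a (a * b)) (Jt b (a * b))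

/-- The approximate error exponent K̃(G,ρ): the infimum of J̃(ρ_e, ρ_{e′}) over all
non-edges e′ = {u,v} and all edges e on the (unique) path joining u and v, where the
correlation of the non-edge is the product of the edge correlations along that path. -/
noncomputable def Ktilde {V : Type*} (G : SimpleGraph V) (ρ : Sym2 V → ℝ) : ℝ :=
  sInf { x : ℝ | ∃ (u v : V) (p : G.Walk u v), p.IsPath ∧ u ≠ v ∧ ¬ G.Adj u v ∧
    ∃ e ∈ p.edges, x = Jt (ρ e) ((p.edges.map ρ).prod) }

/-- The edge correlations induced by an arrangement `π` of the correlation vector `ρ`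
on the edges of `G`. -/
noncomputable def arrange {V : Type*} (G : SimpleGraph V) {n : ℕ}
    (π : G.edgeSet ≃ Fin n) (ρ : Fin n → ℝ) : Sym2 V → ℝ := fun e =>
  letI := Classical.dec (e ∈ G.edgeSet)
  if h : e ∈ G.edgeSet then ρ (π ⟨e, h⟩) else 0

/-- Correlations on the path graph: the edge {i, i+1} carries ρ i. -/
noncomputable def chainRho (d : ℕ) (ρ : Fin (d - 1) → ℝ) : Sym2 (Fin d) → ℝ :=
  Sym2.lift ⟨fun u v =>
    if h : u.val + 1 = v.val then ρ ⟨u.val, by have := v.isLt; omega⟩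
    else if h' : v.val + 1 = u.val then ρ ⟨v.val, by have := u.isLt; omega⟩
    else 0, by
    intro u v
    dsimp only
    by_cases h1 : u.val + 1 = v.val <;> by_cases h2 : v.val + 1 = u.val
    · omega
    · simp [h1, h2]
    · simp [h1, h2]
    · simp [h1, h2]⟩

/-! ### Monotonicity of the crossover rate -/

/-- Monotonicity of `ℓ ^ 2 / q` from the sign of its derivative
`ℓ * (2 * ℓ' * q - ℓ * q') / q ^ 2`. -/
lemma sq_div_le_sq_div {ℓ q ℓ' q' : ℝ → ℝ} {a b : ℝ} (hab : a ≤ b)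
    (hℓ : ∀ x ∈ Set.Icc a b, HasDerivAt ℓ (ℓ' x) x)
    (hq : ∀ x ∈ Set.Icc a b, HasDerivAt q (q' x) x)
    (hq0 : ∀ x ∈ Set.Icc a b, 0 < q x) (hℓ0 : ∀ x ∈ Set.Icc a b, 0 ≤ ℓ x)
    (h : ∀ x ∈ Set.Icc a b, ℓ x * q' x ≤ 2 * ℓ' x * q x) :
    ℓ a ^ 2 / q a ≤ ℓ b ^ 2 / q b := by
  have hd : ∀ x ∈ Set.Icc a b, HasDerivAt (fun x => ℓ x ^ 2 / q x)
      ((2 * ℓ x * ℓ' x * q x - ℓ x ^ 2 * q' x) / q x ^ 2) x := by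
    intro x hx
    have h1 := ((hℓ x hx).pow 2).div (hq x hx) (hq0 x hx).ne'
    refine h1.congr_deriv ?_
    simp
  have hm : MonotoneOn (fun x => ℓ x ^ 2 / q x) (Set.Icc a b) := by
    apply monotoneOn_of_deriv_nonneg (convex_Icc a b)
    · exact fun x hx => (hd x hx).continuousAt.continuousWithinAt
    · intro x hx
      exact (hd x (interior_subset hx)).differentiableAt.differentiableWithinAt
    · intro x hx
      have hx := interior_subset hx
      rw [(hd x hx).deriv]
      apply div_nonneg _ (sq_nonneg _)
      nlinarith [mul_nonneg (hℓ0 x hx) (sub_nonneg.2 (h x hx))]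
  exact hm (Set.left_mem_Icc.2 hab) (Set.right_mem_Icc.2 hab) hab

/-- With `u = x / (1 - x)` and `v = y / (1 - y)`, this is the difference `u - v`. -/
noncomputable def gap (x y : ℝ) : ℝ := 1 / (1 - x) - 1 / (1 - y)

/-- Eight times `J̃`, in the squared correlations `x = a ^ 2` and `y = b ^ 2`. The logarithm of the
quotient is split as a difference, which agrees with it when `x, y < 1`. -/
noncomputable def rate (x y : ℝ) : ℝ :=
  (Real.log (1 - y) - Real.log (1 - x)) ^ 2 / (gap x y * (2 * gap x y + 1))

/-- In terms of `t = gap (a ^ 2) (b ^ 2)` the denominator of `J̃` factors as `2 * t * (2 * t + 1)`. -/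
lemma Jt_eq_rate {a b : ℝ} (ha : a ^ 2 < 1) (hb : b ^ 2 < 1) :
    Jt a b = rate (a ^ 2) (b ^ 2) / 8 := by
  have h1 : (1 - a ^ 2) ≠ 0 := by linarith
  have h2 : (1 - b ^ 2) ≠ 0 := by linarith
  have hB : 2 * (b ^ 4 + b ^ 2) / (1 - b ^ 2) ^ 2 + 2 * (a ^ 4 + a ^ 2) / (1 - a ^ 2) ^ 2
      - 4 * b ^ 2 * (a ^ 2 + 1) / ((1 - b ^ 2) * (1 - a ^ 2))
      = 2 * (gap (a ^ 2) (b ^ 2) * (2 * gap (a ^ 2) (b ^ 2) + 1)) := by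
    unfold gap
    field_simp
    ring
  rw [Jt, rate, hB, Real.log_div h2 h1, mul_pow, mul_div_mul_comm]
  ring

lemma gap_nonneg {x y : ℝ} (hyx : y ≤ x) (hx : x < 1) : 0 ≤ gap x y :=
  sub_nonneg.2 (one_div_le_one_div_of_le (by linarith) (by linarith))

lemma gap_pos {x y : ℝ} (hyx : y < x) (hx : x < 1) : 0 < gap x y :=
  sub_pos.2 (one_div_lt_one_div_of_lt (by linarith) (by linarith))

lemma rate_nonneg {x y : ℝ} (hyx : y ≤ x) (hx : x < 1) : 0 ≤ rate x y := by
  have := gap_nonneg hyx hx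
  unfold rate
  positivity

/-- The rate decreases as the non-edge correlation grows. With `x` fixed and `t = gap x y` as the
variable, `log (1 - y) - log (1 - x) = log s - log (s - t)` where `s = 1 / (1 - x)`, and
`sq_div_le_sq_div` applies because `log s - log (s - t) ≤ t / (s - t)`. -/
lemma rate_anti {x y z : ℝ} (hy : 0 ≤ y) (hyz : y ≤ z) (hzx : z < x) (hx : x < 1) :
    rate x z ≤ rate x y := by
  have key := sq_div_le_sq_div (ℓ := fun t => Real.log (1 / (1 - x)) - Real.log (1 / (1 - x) - t))
    (q := fun t => t * (2 * t + 1)) (ℓ' := fun t => 1 / (1 / (1 - x) - t))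
    (q' := fun t => 4 * t + 1) (a := gap x z) (b := gap x y)
    (by
      have : 1 / (1 - y) ≤ 1 / (1 - z) := one_div_le_one_div_of_le (by linarith) (by linarith)
      unfold gap; linarith)
  have h0 := gap_pos hzx hx
  have hlow : 1 ≤ 1 / (1 - y) := by rw [le_div_iff₀] <;> linarith
  have hs : ∀ t ∈ Set.Icc (gap x z) (gap x y), 0 < t ∧ 1 ≤ 1 / (1 - x) - t := by
    rintro t ⟨h1, h2⟩
    unfold gap at h2
    exact ⟨by linarith, by linarith⟩
  have hval : ∀ w, w < 1 → Real.log (1 / (1 - x)) - Real.log (1 / (1 - x) - gap x w)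
      = Real.log (1 - w) - Real.log (1 - x) := by
    intro w hw
    have : 1 / (1 - x) - gap x w = (1 - w)⁻¹ := by unfold gap; ring
    rw [this, one_div, Real.log_inv, Real.log_inv]
    ring
  have hle : ∀ t ∈ Set.Icc (gap x z) (gap x y),
      Real.log (1 / (1 - x)) - Real.log (1 / (1 - x) - t) ≤ t / (1 / (1 - x) - t) := by
    intro t ht
    obtain ⟨h1, h2⟩ := hs t ht
    rw [← Real.log_div (by linarith) (by linarith)]
    refine (Real.log_le_sub_one_of_pos (by apply div_pos <;> linarith)).trans (le_of_eq ?_)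
    rw [div_sub_one (by linarith)]
    ring
  have := key ?_ ?_ ?_ ?_ ?_
  · simp only [hval z (by linarith), hval y (by linarith)] at this
    exact this
  · intro t ht
    have h2 := (hs t ht).2
    refine (((hasDerivAt_id' t).const_sub (1 / (1 - x))).log (by linarith)).const_sub _
      |>.congr_deriv ?_
    ring
  · intro t ht
    refine ((hasDerivAt_id' t).mul (((hasDerivAt_id' t).const_mul 2).add_const 1)).congr_deriv ?_
    ring
  · intro t ht
    have h1 := (hs t ht).1
    positivity
  · intro t ht
    obtain ⟨h1, h2⟩ := hs t ht
    exact sub_nonneg.2 (Real.log_le_log (by linarith) (by linarith))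
  · intro t ht
    obtain ⟨h1, h2⟩ := hs t ht
    calc _ ≤ t / (1 / (1 - x) - t) * (4 * t + 1) :=
          mul_le_mul_of_nonneg_right (hle t ht) (by linarith)
      _ = (1 / (1 / (1 - x) - t)) * (t * (4 * t + 1)) := by ring
      _ ≤ (1 / (1 / (1 - x) - t)) * (t * (4 * t + 2)) := by
          have : 0 ≤ 1 / (1 / (1 - x) - t) := by positivity
          gcongr; linarith
      _ = _ := by ring

lemma log_le_half_sub_inv {r : ℝ} (hr : 1 ≤ r) : Real.log r ≤ (r - r⁻¹) / 2 := by
  rw [← Real.sinh_log (by linarith)]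
  exact Real.self_le_sinh_iff.2 (Real.log_nonneg hr)

/-- The polynomial inequality to which the derivative condition in `rate_mono` reduces. The
difference of the two sides is
`2 - 5x - x² + b(-5x + 14x² + 6x³ - 3x⁴) + b²x²(7 - 26x + 8x² - x³) + b³x⁴(5 - x)`; at
`x = b = 0.3976` it is about `0.017`, so little room is left. -/
lemma poly_nonneg {x b : ℝ} (hx : 0 < x) (hxb : x ≤ b) (hb : b ≤ 0.3976) :
    (2 - x - b * x) * (1 - b * x ^ 2) * ((1 - x) * (1 - b * x) + 4 * x * (1 - b))
      ≤ 4 * ((1 - x) * (1 - b * x)) * ((1 - x) * (1 - b * x) + 2 * x * (1 - b)) := by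
  have h3 : 0 ≤ b ^ 3 * (x ^ 4 * (5 - x)) := by
    have : 0 ≤ 5 - x := by linarith
    have : 0 ≤ b := by linarith
    positivity
  suffices h : 0 ≤ 2 - 5 * x - x ^ 2 + b * (-5 * x + 14 * x ^ 2 + 6 * x ^ 3 - 3 * x ^ 4)
      + b ^ 2 * (x ^ 2 * (7 - 26 * x + 8 * x ^ 2 - x ^ 3)) by nlinarith
  -- For `x > 0.33` the coefficient of `b` is nonnegative and that of `b ^ 2` is nonpositive, so
  -- replacing `b` by `x` and `b ^ 2` by `0.3976 ^ 2` leaves a one-variable inequality.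
  rcases le_or_gt x 0.33 with hx3 | hx3
  · have e1 : -5 * x + 14 * x ^ 2 ≤ -5 * x + 14 * x ^ 2 + 6 * x ^ 3 - 3 * x ^ 4 := by
      nlinarith [pow_pos hx 3]
    have e2 : b * (-5 * x + 14 * x ^ 2) ≥ 0.3976 * (-5 * x) + x * (14 * x ^ 2) := by
      nlinarith [mul_nonneg hx.le (sub_nonneg.2 hb), mul_nonneg (sq_nonneg x) (sub_nonneg.2 hxb)]
    have e3 : -2 * x ^ 2 ≤ x ^ 2 * (7 - 26 * x + 8 * x ^ 2 - x ^ 3) := by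
      have : -2 ≤ 7 - 26 * x + 8 * x ^ 2 - x ^ 3 := by nlinarith [pow_pos hx 2]
      nlinarith [pow_pos hx 2]
    have e4 : b ^ 2 ≤ 0.16 := by nlinarith
    have e5 := mul_le_mul_of_nonneg_left e1 (hx.le.trans hxb)
    have e6 := mul_le_mul_of_nonneg_left e3 (sq_nonneg b)
    have e7 := mul_le_mul_of_nonneg_right e4 (sq_nonneg x)
    nlinarith [pow_pos hx 2, pow_pos hx 3, mul_nonneg hx.le (sub_nonneg.2 hx3)]
  · have hx4 : x ≤ 0.3976 := hxb.trans hb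
    have e1 : 0 ≤ -5 * x + 14 * x ^ 2 + 6 * x ^ 3 - 3 * x ^ 4 := by
      have : 0 ≤ -5 + 14 * x + 6 * x ^ 2 - 3 * x ^ 3 := by nlinarith [pow_pos hx 2]
      nlinarith
    have e2 : 7 - 26 * x + 8 * x ^ 2 - x ^ 3 ≤ 0 := by nlinarith [pow_pos hx 3]
    have e3 : x ^ 2 * (7 - 26 * x + 8 * x ^ 2 - x ^ 3) ≤ 0 :=
      mul_nonpos_of_nonneg_of_nonpos (sq_nonneg x) e2
    have e4 : b ^ 2 ≤ 0.3976 ^ 2 := by nlinarith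
    have e5 := mul_le_mul_of_nonneg_right hxb e1
    have e6 := mul_le_mul_of_nonpos_right e4 e3
    obtain ⟨y, rfl⟩ : ∃ y, x = 0.3976 - y := ⟨0.3976 - x, by ring⟩
    have hy : 0 ≤ y := by linarith
    have hy' : y ≤ 0.0676 := by linarith
    refine le_trans ?_ (add_le_add (add_le_add_right e5 _) e6)
    norm_num
    ring_nf
    nlinarith [pow_nonneg hy 2, pow_nonneg hy 3, pow_nonneg hy 4, pow_nonneg hy 5]

/-- When the non-edge correlation is a fixed multiple of the edge correlation, the rate grows with
the latter. The restriction `x₂ ≤ b` matters: for `b` near `0` the derivative changes sign just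
below `x = 0.63055 ^ 2`. The logarithm is bounded through `log r ≤ (r - r⁻¹) / 2`. -/
lemma rate_mono {x₁ x₂ b : ℝ} (h₁ : 0 < x₁) (h₁₂ : x₁ ≤ x₂) (h₂ : x₂ ≤ b) (hb : b ≤ 0.3976) :
    rate x₁ (b * x₁) ≤ rate x₂ (b * x₂) := by
  have hs : ∀ x ∈ Set.Icc x₁ x₂, 0 < x ∧ x ≤ b ∧ 0 < 1 - x ∧ 0 < 1 - b * x ∧ b * x < x := by
    rintro x ⟨h3, h4⟩
    refine ⟨by linarith, by linarith, by linarith, by nlinarith, by nlinarith⟩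
  have hgap : ∀ x ∈ Set.Icc x₁ x₂,
      gap x (b * x) = x * (1 - b) / ((1 - x) * (1 - b * x)) := by
    intro x hx
    obtain ⟨h1, h2, h3, h4, h5⟩ := hs x hx
    have h4' : 1 - x * b ≠ 0 := by linarith
    unfold gap
    field_simp
    ring
  have hlog : ∀ x ∈ Set.Icc x₁ x₂, Real.log (1 - b * x) - Real.log (1 - x)
      ≤ x * (1 - b) * (2 - x - b * x) / (2 * ((1 - x) * (1 - b * x))) := by
    intro x hx
    obtain ⟨h1, h2, h3, h4, h5⟩ := hs x hx
    rw [← Real.log_div h4.ne' h3.ne']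
    refine (log_le_half_sub_inv ((one_le_div h3).2 (by linarith))).trans (le_of_eq ?_)
    field_simp
    ring
  refine sq_div_le_sq_div (ℓ := fun x => Real.log (1 - b * x) - Real.log (1 - x))
    (q := fun x => gap x (b * x) * (2 * gap x (b * x) + 1))
    (ℓ' := fun x => (1 - b) / ((1 - x) * (1 - b * x)))
    (q' := fun x => (1 - b) * (1 - b * x ^ 2) / ((1 - x) * (1 - b * x)) ^ 2
      * (4 * gap x (b * x) + 1)) h₁₂ ?_ ?_ ?_ ?_ ?_
  · intro x hx
    obtain ⟨h1, h2, h3, h4, h5⟩ := hs x hx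
    have h4' : 1 - x * b ≠ 0 := by linarith
    have d1 := (((hasDerivAt_id' x).const_mul b).const_sub 1).log h4.ne'
    have d2 := ((hasDerivAt_id' x).const_sub 1).log h3.ne'
    refine (d1.sub d2).congr_deriv ?_
    field_simp
    ring
  · intro x hx
    obtain ⟨h1, h2, h3, h4, h5⟩ := hs x hx
    have h4' : 1 - x * b ≠ 0 := by linarith
    have d1 := (((hasDerivAt_id' x).const_mul b).const_sub 1).inv h4.ne'
    have d2 := ((hasDerivAt_id' x).const_sub 1).inv h3.ne'
    have d : HasDerivAt (fun x => gap x (b * x))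
        ((1 - b) * (1 - b * x ^ 2) / ((1 - x) * (1 - b * x)) ^ 2) x := by
      simp only [gap, one_div]
      refine (d2.sub d1).congr_deriv ?_
      field_simp
      ring
    refine (d.mul ((d.const_mul 2).add_const 1)).congr_deriv ?_
    ring
  · intro x hx
    obtain ⟨h1, h2, h3, h4, h5⟩ := hs x hx
    have := gap_pos h5 (by linarith)
    positivity
  · intro x hx
    obtain ⟨h1, h2, h3, h4, h5⟩ := hs x hx
    exact sub_nonneg.2 (Real.log_le_log h3 (by linarith))
  · intro x hx
    obtain ⟨h1, h2, h3, h4, h5⟩ := hs x hx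
    have h4' : 1 - x * b ≠ 0 := by linarith
    have hb1 : 0 < 1 - b := by linarith
    have hbx : 0 < 1 - b * x ^ 2 := by nlinarith
    have hg := gap_nonneg h5.le (by linarith)
    refine (mul_le_mul_of_nonneg_right (hlog x hx) (by positivity)).trans ?_
    simp only [hgap x hx]
    have hP := poly_nonneg h1 h2 hb
    have e1 : x * (1 - b) * (2 - x - b * x) / (2 * ((1 - x) * (1 - b * x))) *
        ((1 - b) * (1 - b * x ^ 2) / ((1 - x) * (1 - b * x)) ^ 2
          * (4 * (x * (1 - b) / ((1 - x) * (1 - b * x))) + 1))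
        = x * (1 - b) ^ 2 / (2 * ((1 - x) * (1 - b * x)) ^ 4) * ((2 - x - b * x) * (1 - b * x ^ 2)
          * ((1 - x) * (1 - b * x) + 4 * x * (1 - b))) := by
      field_simp
      ring
    have e2 : 2 * ((1 - b) / ((1 - x) * (1 - b * x))) * (x * (1 - b) / ((1 - x) * (1 - b * x))
          * (2 * (x * (1 - b) / ((1 - x) * (1 - b * x))) + 1))
        = x * (1 - b) ^ 2 / (2 * ((1 - x) * (1 - b * x)) ^ 4) * (4 * ((1 - x) * (1 - b * x))
          * ((1 - x) * (1 - b * x) + 2 * x * (1 - b))) := by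
      field_simp
      ring
    rw [e1, e2]
    exact mul_le_mul_of_nonneg_left hP (by positivity)

/-! ### Consequences for `Jt` and `W` -/

lemma Jt_nonneg {a b : ℝ} (hba : |b| ≤ |a|) (ha : |a| < 1) : 0 ≤ Jt a b := by
  have h1 : a ^ 2 < 1 := (sq_lt_one_iff_abs_lt_one a).2 ha
  have h2 : b ^ 2 ≤ a ^ 2 := sq_le_sq.2 hba
  rw [Jt_eq_rate h1 (h2.trans_lt h1)]
  exact div_nonneg (rate_nonneg h2 h1) (by norm_num)

lemma Jt_anti {a b c : ℝ} (hbc : |b| ≤ |c|) (hca : |c| < |a|) (ha : |a| < 1) :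
    Jt a c ≤ Jt a b := by
  have h1 : a ^ 2 < 1 := (sq_lt_one_iff_abs_lt_one a).2 ha
  have h2 : b ^ 2 ≤ c ^ 2 := sq_le_sq.2 hbc
  have h3 : c ^ 2 < a ^ 2 := sq_lt_sq.2 hca
  rw [Jt_eq_rate h1 (h3.trans h1), Jt_eq_rate h1 ((h2.trans_lt h3).trans h1)]
  gcongr
  exact rate_anti (sq_nonneg b) h2 h3 h1

lemma Jt_mul_mono {a b r : ℝ} (ha : a ≠ 0) (hab : |a| ≤ |b|) (hbr : |b| ≤ |r|)
    (hr : |r| < 0.63055) : Jt a (r * a) ≤ Jt b (r * b) := by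
  have h0 : 0 < a ^ 2 := by positivity
  have h1 : a ^ 2 ≤ b ^ 2 := sq_le_sq.2 hab
  have h2 : b ^ 2 ≤ r ^ 2 := sq_le_sq.2 hbr
  have h3 : r ^ 2 ≤ 0.3976 := by
    rw [← sq_abs]
    nlinarith [abs_nonneg r]
  rw [Jt_eq_rate (by linarith) (by nlinarith), Jt_eq_rate (by linarith) (by nlinarith)]
  gcongr
  simpa only [mul_pow] using rate_mono h0 h1 h2 h3

lemma abs_mul_lt_left {a r : ℝ} (ha : a ≠ 0) (hr : |r| < 1) : |r * a| < |a| := by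
  rw [abs_mul]
  exact mul_lt_of_lt_one_left (abs_pos.2 ha) hr

/-- Among pairs separated by the consecutive pair `|xj| ≤ |xi|`, that is with `|xl| ≤ |xj|` and
`|xi| ≤ |xk|`, the consecutive pair has the largest weight. -/
lemma W_le_W {xk xi xj xl : ℝ} (hl : xl ≠ 0) (hlj : |xl| ≤ |xj|) (hji : |xj| ≤ |xi|)
    (hik : |xi| ≤ |xk|) (hk : |xk| < 0.63055) : W xk xl ≤ W xi xj := by
  have hk1 : |xk| < 1 := hk.trans (by norm_num)
  have hi : |xi| < 0.63055 := hik.trans_lt hk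
  have hi0 : xi ≠ 0 := abs_pos.1 ((abs_pos.2 hl).trans_le (hlj.trans hji))
  have hl1 : |xl| < 1 := (hlj.trans (hji.trans hik)).trans_lt hk1
  have h1 : W xk xl ≤ Jt xl (xi * xl) := by
    refine (min_le_right _ _).trans (Jt_anti ?_ (abs_mul_lt_left hl hk1) hl1)
    rw [abs_mul, abs_mul]
    gcongr
  refine le_min (h1.trans ?_) (h1.trans (Jt_mul_mono hl hlj hji hi))
  -- The two values of `Jt` at `xl` and at `xi` are compared through `Jt xi (xi * xi)`.
  refine (Jt_mul_mono hl (hlj.trans hji) le_rfl hi).trans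
    (Jt_anti ?_ (abs_mul_lt_left hi0 (hik.trans_lt hk1)) (hik.trans_lt hk1))
  rw [abs_mul, abs_mul]
  gcongr

/-! ### Paths and error exponents -/

open SimpleGraph in
/-- Every edge of a walk of length at least two has a neighbouring edge in the walk; the remaining
edges of the walk form the list `l`. -/
lemma exists_adjacent_edge {V : Type*} {G : SimpleGraph V} {u v : V} (p : G.Walk u v)
    (hp : 2 ≤ p.length) (e : Sym2 V) (he : e ∈ p.edges) :
    ∃ a b c : V, ∃ l : List (Sym2 V), G.Adj a b ∧ G.Adj b c ∧
      p.edges.Perm (s(a, b) :: s(b, c) :: l) ∧ (e = s(a, b) ∨ e = s(b, c)) := by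
  induction p with
  | nil => simp at hp
  | @cons u v w h p ih =>
    cases p with
    | nil => simp at hp
    | @cons _ x _ h' q =>
      rw [Walk.edges_cons, List.mem_cons] at he
      rcases he with he | he
      · exact ⟨u, v, x, q.edges, h, h', by simp, Or.inl he⟩
      · cases q with
        | nil => exact ⟨u, v, w, [], h, h', by simp, Or.inr (by simpa using he)⟩
        | cons h'' q' =>
          obtain ⟨a, b, c, l, hab, hbc, hl, h3⟩ := ih (by simp) he
          refine ⟨a, b, c, s(u, v) :: l, hab, hbc, ?_, h3⟩
          rw [Walk.edges_cons]
          exact (hl.cons _).trans ((List.Perm.swap _ _ _).trans ((List.Perm.swap _ _ _).cons _))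

lemma abs_prod_map_le_one {α : Type*} (ρ : α → ℝ) (l : List α) (h : ∀ e ∈ l, |ρ e| ≤ 1) :
    |(l.map ρ).prod| ≤ 1 := by
  induction l with
  | nil => simp
  | cons e l ih =>
    rw [List.map_cons, List.prod_cons, abs_mul]
    exact mul_le_one₀ (h e (by simp)) (abs_nonneg _) (ih fun e' he => h e' (by simp [he]))

lemma abs_prod_map_le {α : Type*} (ρ : α → ℝ) (l : List α) (h : ∀ e ∈ l, |ρ e| ≤ 1)
    {e : α} (he : e ∈ l) : |(l.map ρ).prod| ≤ |ρ e| := by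
  obtain ⟨l₁, l₂, rfl⟩ := List.append_of_mem he
  have h1 := abs_prod_map_le_one ρ l₁ fun e he => h e (by simp [he])
  have h2 := abs_prod_map_le_one ρ l₂ fun e he => h e (by simp [he])
  rw [List.map_append, List.prod_append, List.map_cons, List.prod_cons, abs_mul, abs_mul]
  calc _ ≤ 1 * (|ρ e| * 1) := by gcongr
    _ = _ := by ring

/-- The set of crossover rates over pairs (non-edge, edge on its path), whose infimum is
`Ktilde G ρ`. -/
def exponents {V : Type*} (G : SimpleGraph V) (ρ : Sym2 V → ℝ) : Set ℝ :=
  { x : ℝ | ∃ (u v : V) (p : G.Walk u v), p.IsPath ∧ u ≠ v ∧ ¬ G.Adj u v ∧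
    ∃ e ∈ p.edges, x = Jt (ρ e) ((p.edges.map ρ).prod) }

open SimpleGraph in
lemma exponents_bddBelow {V : Type*} (G : SimpleGraph V) (ρ : Sym2 V → ℝ)
    (hρ : ∀ e ∈ G.edgeSet, |ρ e| < 1) : BddBelow (exponents G ρ) := by
  refine ⟨0, ?_⟩
  rintro _ ⟨u, v, p, -, -, -, e, he, rfl⟩
  exact Jt_nonneg
    (abs_prod_map_le ρ _ (fun e he => (hρ e (p.edges_subset_edgeSet he)).le) he)
    (hρ e (p.edges_subset_edgeSet he))

open SimpleGraph in
lemma W_mem_exponents {V : Type*} {G : SimpleGraph V} (ρ : Sym2 V → ℝ) {a b c : V}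
    (hab : G.Adj a b) (hbc : G.Adj b c) (hac : a ≠ c) (hn : ¬ G.Adj a c) :
    W (ρ s(a, b)) (ρ s(b, c)) ∈ exponents G ρ := by
  have hp : (Walk.cons hab (Walk.cons hbc Walk.nil)).IsPath := by
    simp [Walk.isPath_def, hab.ne, hbc.ne, hac]
  unfold W
  rcases min_choice (Jt (ρ s(a, b)) (ρ s(a, b) * ρ s(b, c)))
    (Jt (ρ s(b, c)) (ρ s(a, b) * ρ s(b, c))) with h | h
  · exact ⟨a, c, _, hp, hac, hn, s(a, b), by simp, by rw [h]; simp⟩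
  · exact ⟨a, c, _, hp, hac, hn, s(b, c), by simp, by rw [h]; simp⟩

open SimpleGraph in
/-- Every crossover rate is at least the weight of a pair of adjacent edges: shortening the path to
two edges containing the given one only increases the non-edge correlation. -/
lemma exists_W_le {V : Type*} {G : SimpleGraph V} (ρ : Sym2 V → ℝ)
    (hρ : ∀ e ∈ G.edgeSet, |ρ e| < 1 ∧ ρ e ≠ 0) {x : ℝ} (hx : x ∈ exponents G ρ) :
    ∃ a b c : V, G.Adj a b ∧ G.Adj b c ∧ a ≠ c ∧ W (ρ s(a, b)) (ρ s(b, c)) ≤ x := by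
  obtain ⟨u, v, p, hp, huv, hadj, e, he, rfl⟩ := hx
  have hlen : 2 ≤ p.length := by
    by_contra! h
    interval_cases hl : p.length
    · exact huv (Walk.eq_of_length_eq_zero hl)
    · exact hadj (Walk.adj_of_length_eq_one hl)
  obtain ⟨a, b, c, l, hab, hbc, hl, h3⟩ := exists_adjacent_edge p hlen e he
  have hnd := hl.nodup_iff.1 hp.isTrail.edges_nodup
  have hac : a ≠ c := by
    rintro rfl
    simp [Sym2.eq_swap] at hnd
  refine ⟨a, b, c, hab, hbc, hac, ?_⟩
  obtain ⟨ha1, ha0⟩ := hρ _ (G.mem_edgeSet.2 hab)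
  obtain ⟨hb1, hb0⟩ := hρ _ (G.mem_edgeSet.2 hbc)
  have hl1 : |(l.map ρ).prod| ≤ 1 := by
    refine abs_prod_map_le_one ρ l fun e he => (hρ e (p.edges_subset_edgeSet ?_)).1.le
    exact hl.mem_iff.2 (by simp [he])
  have hprod : |(p.edges.map ρ).prod| ≤ |ρ s(a, b) * ρ s(b, c)| := by
    rw [(hl.map ρ).prod_eq, List.map_cons, List.map_cons, List.prod_cons, List.prod_cons,
      ← mul_assoc, abs_mul]
    exact mul_le_of_le_one_right (abs_nonneg _) hl1
  rcases h3 with rfl | rfl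
  · refine (min_le_left _ _).trans (Jt_anti hprod ?_ ha1)
    rw [mul_comm]
    exact abs_mul_lt_left ha0 hb1
  · exact (min_le_right _ _).trans (Jt_anti hprod (abs_mul_lt_left hb0 ha1) hb1)

lemma W_comm (a b : ℝ) : W a b = W b a := by
  rw [W, W, min_comm, mul_comm]

open SimpleGraph in
/-- In a connected graph whose edges are numbered by `π`, some vertex meets both an edge numbered
at most `i` and an edge numbered more than `i`: otherwise the vertices meeting an edge of the first
kind would form a union of components. -/
lemma exists_separated_edges {V : Type*} {T : SimpleGraph V} (hT : T.Connected) {n : ℕ}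
    (π : T.edgeSet ≃ Fin n) (i : ℕ) (hi : i + 1 < n) :
    ∃ a b c : V, ∃ (hab : T.Adj a b) (hbc : T.Adj b c),
      (π ⟨s(a, b), hab⟩).val ≤ i ∧ i + 1 ≤ (π ⟨s(b, c), hbc⟩).val := by
  -- `S` is the set of vertices meeting an edge numbered at most `i`.
  let S : Set V := {b | ∃ a, ∃ hab : T.Adj a b, (π ⟨s(a, b), hab⟩).val ≤ i}
  have hend : ∀ k : Fin n, ∃ a b, ∃ hab : T.Adj a b, π ⟨s(a, b), hab⟩ = k := by
    intro k
    obtain ⟨⟨e, he⟩, rfl⟩ := π.surjective k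
    induction e with | _ a b => exact ⟨a, b, he, rfl⟩
  obtain ⟨u, v, huv, h1⟩ := hend ⟨i, by omega⟩
  obtain ⟨x, y, hxy, h2⟩ := hend ⟨i + 1, hi⟩
  have hv : v ∈ S := ⟨u, huv, by rw [h1]⟩
  by_cases hx : x ∈ S
  · obtain ⟨a, hax, h3⟩ := hx
    exact ⟨a, x, y, hax, hxy, h3, by rw [h2]⟩
  · obtain ⟨w⟩ := hT.preconnected v x
    obtain ⟨d, -, ⟨a, hab, h3⟩, hd⟩ := w.exists_boundary_dart S hv hx
    refine ⟨a, d.fst, d.snd, hab, d.adj, h3, ?_⟩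
    by_contra! h4
    exact hd ⟨d.fst, d.adj, by omega⟩

lemma not_adj_of_isAcyclic {V : Type*} {T : SimpleGraph V} (hT : T.IsAcyclic) {a b c : V}
    (hab : T.Adj a b) (hbc : T.Adj b c) : ¬ T.Adj a c := by
  classical
  intro hac
  exact hT.cliqueFree le_rfl {a, b, c}
    (SimpleGraph.is3Clique_triple_iff.2 ⟨hab, hac, hbc⟩)

lemma chainRho_edge {d : ℕ} (ρ : Fin (d - 1) → ℝ) {u v : Fin d} (h : u.val + 1 = v.val) :
    chainRho d ρ s(u, v) = ρ ⟨u.val, by have := v.isLt; omega⟩ := by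
  simp [chainRho, h]

/-! ### The sorted chain -/

/-- The chain C* with the correlations placed in decreasing order of magnitude
(ρ_i on edge {v_i, v_{i+1}}, |ρ₁| ≥ … ≥ |ρ_{d−1}|, all below ρcrit = 0.63055) is the
easiest model to learn: every arrangement of (ρ₁,…,ρ_{d−1}) on every tree on d vertices
has an approximate error exponent at most K̃(C*), and
K̃(C*) = min_{1 ≤ i ≤ d−2} W(ρ_i, ρ_{i+1}). -/
theorem chain_sorted_easiest (d : ℕ) (hd : 4 ≤ d) (ρ : Fin (d - 1) → ℝ)
    (hρ : ∀ i, ρ i ∈ Set.Ioo (-1 : ℝ) 1 ∧ ρ i ≠ 0)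
    (hsort : ∀ i j : Fin (d - 1), i ≤ j → |ρ j| ≤ |ρ i|)
    (hcrit : |ρ ⟨0, by omega⟩| < 0.63055) :
    (∀ (T : SimpleGraph (Fin d)), T.IsTree → ∀ π : T.edgeSet ≃ Fin (d - 1),
        Ktilde T (arrange T π ρ) ≤ Ktilde (SimpleGraph.pathGraph d) (chainRho d ρ))
    ∧ Ktilde (SimpleGraph.pathGraph d) (chainRho d ρ)
        = sInf { x : ℝ | ∃ i : ℕ, ∃ h : i + 1 < d - 1,
            x = W (ρ ⟨i, by omega⟩) (ρ ⟨i + 1, h⟩) } := by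
  have hρ1 : ∀ i, |ρ i| < 1 ∧ ρ i ≠ 0 := fun i => ⟨abs_lt.2 (hρ i).1, (hρ i).2⟩
  set Ws : Set ℝ := { x : ℝ | ∃ i : ℕ, ∃ h : i + 1 < d - 1,
    x = W (ρ ⟨i, by omega⟩) (ρ ⟨i + 1, h⟩) } with hWs
  have hne : Ws.Nonempty := ⟨_, 0, by omega, rfl⟩
  have hchain1 : ∀ e ∈ (SimpleGraph.pathGraph d).edgeSet,
      |chainRho d ρ e| < 1 ∧ chainRho d ρ e ≠ 0 := by
    intro e
    induction e with
    | _ u v =>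
      intro he
      rcases SimpleGraph.pathGraph_adj.1 he with h | h
      · rw [chainRho_edge ρ h]
        exact hρ1 _
      · rw [Sym2.eq_swap, chainRho_edge ρ h]
        exact hρ1 _
  have hmem : Ws ⊆ exponents (SimpleGraph.pathGraph d) (chainRho d ρ) := by
    rintro _ ⟨i, h, rfl⟩
    have := W_mem_exponents (G := SimpleGraph.pathGraph d) (chainRho d ρ)
      (a := ⟨i, by omega⟩) (b := ⟨i + 1, by omega⟩) (c := ⟨i + 2, by omega⟩)
      (by simp [SimpleGraph.pathGraph_adj]) (by simp [SimpleGraph.pathGraph_adj])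
      (by simp) (by simp [SimpleGraph.pathGraph_adj]; omega)
    rwa [chainRho_edge ρ rfl, chainRho_edge ρ rfl] at this
  have hbdd := exponents_bddBelow (SimpleGraph.pathGraph d) (chainRho d ρ)
    fun e he => (hchain1 e he).1
  have hK : Ktilde (SimpleGraph.pathGraph d) (chainRho d ρ) = sInf Ws := by
    change sInf (exponents _ _) = _
    refine le_antisymm (csInf_le_csInf hbdd hne hmem) (le_csInf (hne.mono hmem) ?_)
    intro x hx
    obtain ⟨a, b, c, hab, hbc, hac, hW⟩ := exists_W_le _ hchain1 hx
    refine (csInf_le (hbdd.mono hmem) ?_).trans hW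
    rw [SimpleGraph.pathGraph_adj] at hab hbc
    have hac' : a.val ≠ c.val := fun h => hac (Fin.ext h)
    have hc := c.isLt
    have ha := a.isLt
    rcases hab with h | h
    · have h' : b.val + 1 = c.val := by omega
      rw [chainRho_edge ρ h, chainRho_edge ρ h']
      refine ⟨a.val, by omega, ?_⟩
      simp only [h]
    · have h' : c.val + 1 = b.val := by omega
      rw [W_comm, Sym2.eq_swap, chainRho_edge ρ h', Sym2.eq_swap, chainRho_edge ρ h]
      refine ⟨c.val, by omega, ?_⟩
      simp only [h']
  refine ⟨fun T hT π => ?_, hK⟩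
  rw [hK]
  have harr : ∀ {a b : Fin d} (h : T.Adj a b), arrange T π ρ s(a, b) = ρ (π ⟨s(a, b), h⟩) := by
    intro a b h
    simp [arrange, h]
  have hT1 : ∀ e ∈ T.edgeSet, |arrange T π ρ e| < 1 := by
    intro e
    induction e with
    | _ u v =>
      intro he
      rw [harr he]
      exact (hρ1 _).1
  refine le_csInf hne ?_
  rintro _ ⟨i, hi, rfl⟩
  obtain ⟨a, b, c, hab, hbc, h1, h2⟩ := exists_separated_edges hT.1 π i hi
  have hac : a ≠ c := by
    rintro rfl
    have : (⟨s(a, b), hab⟩ : T.edgeSet) = ⟨s(b, a), hbc⟩ := Subtype.ext Sym2.eq_swap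
    rw [this] at h1
    omega
  have hW := W_mem_exponents (arrange T π ρ) hab hbc hac (not_adj_of_isAcyclic hT.2 hab hbc)
  rw [harr hab, harr hbc] at hW
  exact (csInf_le (exponents_bddBelow T _ hT1) hW).trans
    (W_le_W (hρ1 _).2 (hsort _ _ h2) (hsort _ _ (Fin.mk_le_mk.2 (by omega))) (hsort _ _ h1)
      ((hsort _ _ (Fin.mk_le_mk.2 (Nat.zero_le _))).trans_lt hcrit))
end

section
/- Let ρ₁,…,ρ_{d−1} ∈ (−1,1)∖{0} satisfy |ρ₁| ≥ |ρ₂| ≥ … ≥ |ρ_{d−1}| and |ρ₁| ≤ ρcrit, where ρcrit = 0.63055. Then for all indices i and j: if j ≥ i+1 then W(ρ_i, ρ_j) ≤ W(ρ_i, ρ_{i+1}), and if j ≤ i−1 then W(ρ_i, ρ_j) ≤ W(ρ_i, ρ_{i−1}). -/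
/-- The polynomial here is the divided difference `(P s t - P t t) / (t - s)`, where `P` is the
right-hand side minus the left-hand side of `poly_ineq`. -/
theorem R_nonneg {s t : ℝ} (hs : 0 < s) (hst : s ≤ t) (ht : t ≤ 2 / 5) :
   0 ≤ 5 + 5*t + (s+t)*(1-14*t-7*t^2) - (s^2+s*t+t^2)*(6*t-26*t^2)
     + (s^3+s^2*t+s*t^2+t^3)*(3*t-8*t^2-5*t^3) + (s^4+s^3*t+s^2*t^2+s*t^3+t^4)*(t^2+t^3) := by
  have t0 : 0 < t := hs.trans_le hst
  have h1 : 0 ≤ (s^4+s^3*t+s^2*t^2+s*t^3+t^4)*(t^2+t^3) := by positivity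
  have h2 : 0 ≤ (s^3+s^2*t+s*t^2+t^3)*(3*t-8*t^2-5*t^3) + (s^3+s^2*t+s*t^2+t^3)*t := by
    have : 0 ≤ (s^3+s^2*t+s*t^2+t^3)*(t * (4 - 8*t-5*t^2)) := by
      have : 0 ≤ 4 - 8*t-5*t^2 := by nlinarith
      positivity
    linarith
  have h3 : (s^2+s*t+t^2)*(6*t-26*t^2) ≤ 12/25 * 2/5 := by
    have a : s^2+s*t+t^2 ≤ 12/25 := by nlinarith
    have b : 6*t-26*t^2 ≤ 2/5 := by nlinarith [sq_nonneg (t-3/26)]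
    calc _ ≤ (s^2+s*t+t^2) * (2/5) := by gcongr
      _ ≤ _ := by linarith
  have h4 : (s^3+s^2*t+s*t^2+t^3)*t ≤ 1/5 := by
    have hs' := hst.trans ht
    calc _ ≤ ((2/5)^3+(2/5)^2*(2/5)+(2/5)*(2/5)^2+(2/5)^3)*(2/5:ℝ) := by gcongr
      _ ≤ _ := by norm_num
  have h5 : -(23/5) ≤ (s+t)*(1-14*t-7*t^2) := by nlinarith
  linarith

/-- What the monotonicity of `F` in `s` amounts to once the logarithm is replaced by the bound
`L_bound`. For fixed `t` the gap is smallest at `s = t`, where it is still positive for `t = 2 / 5`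
(it is about `0.01` there). -/
theorem poly_ineq {s t : ℝ} (hs : 0 < s) (hst : s ≤ t) (ht : t ≤ 2 / 5) :
    (2 - s - s * t) * ((1 - s) * (1 - s * t) + 4 * (s * (1 - t))) * (1 - s ^ 2 * t) ≤
      4 * ((1 - s) * (1 - s * t)) * ((1 - s) * (1 - s * t) + 2 * (s * (1 - t))) := by
  have hR := mul_nonneg (sub_nonneg.2 hst) (R_nonneg hs hst ht)
  -- the gap on the diagonal `s = t`
  have h0 : 0 ≤ 2 - 5*t - 6*t^2+14*t^3+13*t^4-29*t^5+8*t^6+4*t^7-t^8 := by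
    have t0 : 0 < t := hs.trans_le hst
    have e := sub_nonneg.2 ht
    have h6 : 0 ≤ t^6*(8+4*t-t^2) := by
      have : 0 ≤ 8+4*t-t^2 := by nlinarith
      positivity
    nlinarith [mul_nonneg t0.le e, mul_nonneg (pow_nonneg t0.le 2) e, mul_nonneg (pow_nonneg t0.le 3) e, mul_nonneg (pow_nonneg t0.le 4) e, mul_nonneg e e,mul_nonneg t0.le (mul_nonneg e e)]
  nlinarith

/-- This is `w ≤ sinh w` at `w = log y`. -/
theorem L_bound {y : ℝ} (hy : 1 ≤ y) : Real.log y ≤ (y - y⁻¹) / 2 := by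
  rw [← Real.sinh_log (by linarith)]
  exact Real.self_le_sinh_iff.2 (Real.log_nonneg hy)

/-- The crossover rate `Jt a (a * b)` as a function of `s = a ^ 2` and `t = b ^ 2`. With
`D = 1 / (1 - s) - 1 / (1 - s * t)` and `L` the difference of logarithms it is
`L ^ 2 / (8 * D * (1 + 2 * D))`. -/
noncomputable def F (s t : ℝ) : ℝ :=
  (Real.log (1 - s * t) - Real.log (1 - s)) ^ 2 /
    (8 * ((1 / (1 - s) - 1 / (1 - s * t)) * (1 + 2 * (1 / (1 - s) - 1 / (1 - s * t)))))

theorem Jt_eq {a b : ℝ} (ha : a ^ 2 < 1) (hb : b ^ 2 < 1) : Jt a (a * b) = F (a ^ 2) (b ^ 2) := by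
  have h1 : 0 < 1 - a ^ 2 := by linarith
  have h2 : 0 < 1 - a ^ 2 * b ^ 2 := by nlinarith [sq_nonneg a, sq_nonneg b]
  unfold Jt F
  rw [mul_pow, mul_pow a b 2, mul_pow a b 4, Real.log_div h2.ne' h1.ne']
  have e : (2 * (a ^ 4 * b ^ 4 + a ^ 2 * b ^ 2) / (1 - a ^ 2 * b ^ 2) ^ 2 +
      2 * (a ^ 4 + a ^ 2) / (1 - a ^ 2) ^ 2 -
      4 * (a ^ 2 * b ^ 2) * (a ^ 2 + 1) / ((1 - a ^ 2 * b ^ 2) * (1 - a ^ 2))) =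
      2 * ((1 / (1 - a ^ 2) - 1 / (1 - a ^ 2 * b ^ 2)) *
        (1 + 2 * (1 / (1 - a ^ 2) - 1 / (1 - a ^ 2 * b ^ 2)))) := by
    field_simp
    ring
  rw [e, ← mul_div_mul_left _ _ (four_ne_zero (α := ℝ))]
  congr 1 <;> ring

/-- The quotient rule for `L ^ 2 / (8 * D * (1 + 2 * D))`, arranged so that for `0 ≤ L` the sign of
the derivative is that of `2 L' D (1 + 2 D) - L D' (1 + 4 D)`. -/
theorem quot_deriv {L D : ℝ → ℝ} {L' D' x : ℝ} (hL : HasDerivAt L L' x) (hD : HasDerivAt D D' x)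
    (h0 : 0 < D x) :
    HasDerivAt (fun x => L x ^ 2 / (8 * (D x * (1 + 2 * D x))))
      (8 * L x * (2 * L' * (D x * (1 + 2 * D x)) - L x * (D' * (1 + 4 * D x))) /
        (8 * (D x * (1 + 2 * D x))) ^ 2) x := by
  have h1 := (hL.pow 2).div ((hD.mul ((hD.const_mul 2).const_add 1)).const_mul 8)
    (by simp only [Pi.mul_apply]; positivity)
  refine h1.congr_deriv ?_
  simp only [Pi.pow_apply, Pi.mul_apply]
  ring

theorem D_pos {s t : ℝ} (hs : 0 < s) (hs1 : s < 1) (ht1 : t < 1) :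
    0 < 1 / (1 - s) - 1 / (1 - s * t) := by
  rw [sub_pos]
  exact one_div_lt_one_div_of_lt (by linarith) (by nlinarith)

theorem D_eq {s t : ℝ} (hs : 0 < 1 - s) (ht : 0 < 1 - s * t) :
    1 / (1 - s) - 1 / (1 - s * t) = s * (1 - t) / ((1 - s) * (1 - s * t)) := by
  field_simp; ring

/-- `F` decreases in `t`; the sign of the derivative follows from `log y ≤ y - 1`. -/
theorem F_anti {s : ℝ} (hs : 0 < s) (hs1 : s < 1) : AntitoneOn (F s) (Set.Ioo 0 1) := by
  have key : ∀ t ∈ Set.Ioo (0:ℝ) 1, ∃ d ≤ 0, HasDerivAt (F s) d t := by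
    rintro t ⟨t0, t1⟩
    have h1 : 0 < 1 - s := by linarith
    have h2 : 0 < 1 - s * t := by nlinarith
    have hL : HasDerivAt (fun t => Real.log (1 - s * t) - Real.log (1 - s)) (-s / (1 - s * t)) t := by
      have := ((((hasDerivAt_id t).const_mul s).const_sub 1).log h2.ne').sub_const (Real.log (1 - s))
      simpa using this
    have hD : HasDerivAt (fun t => 1 / (1 - s) - 1 / (1 - s * t)) (-s / (1 - s * t) ^ 2) t := by
      have := ((((hasDerivAt_id t).const_mul s).const_sub 1).inv h2.ne').const_sub (1 - s)⁻¹
      simp only [one_div]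
      refine this.congr_deriv ?_
      simp
      ring
    refine ⟨_, ?_, quot_deriv hL hD (D_pos hs hs1 t1)⟩
    have hl0 : 0 ≤ Real.log (1 - s * t) - Real.log (1 - s) :=
      sub_nonneg.2 (Real.log_le_log h1 (by nlinarith))
    have hl : Real.log (1 - s * t) - Real.log (1 - s) ≤
        (1 - s * t) * (1 / (1 - s) - 1 / (1 - s * t)) := by
      rw [← Real.log_div h2.ne' h1.ne']
      refine (Real.log_le_sub_one_of_pos (by positivity)).trans (le_of_eq ?_)
      field_simp
    have hd := D_pos hs hs1 t1
    set D := 1 / (1 - s) - 1 / (1 - s * t)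
    set L := Real.log (1 - s * t) - Real.log (1 - s)
    apply div_nonpos_of_nonpos_of_nonneg _ (by positivity)
    apply mul_nonpos_of_nonneg_of_nonpos (by positivity)
    have e : 2 * (-s / (1 - s * t)) * (D * (1 + 2 * D)) - L * (-s / (1 - s * t) ^ 2 * (1 + 4 * D))
        = s / (1 - s * t) ^ 2 * (L * (1 + 4 * D) - (1 - s * t) * D * (2 + 4 * D)) := by
      field_simp
      ring
    rw [e]
    apply mul_nonpos_of_nonneg_of_nonpos (by positivity)
    have h3 : L * (1 + 4 * D) ≤ (1 - s * t) * D * (1 + 4 * D) := by gcongr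
    have h4 : 0 < (1 - s * t) * D := by positivity
    linarith
  choose! d hd hd' using key
  apply antitoneOn_of_deriv_nonpos (convex_Ioo 0 1)
  · exact fun t ht => (hd' t ht).continuousAt.continuousWithinAt
  · rw [interior_Ioo]
    exact fun t ht => (hd' t ht).differentiableAt.differentiableWithinAt
  · rw [interior_Ioo]
    exact fun t ht => (hd' t ht).deriv ▸ hd t ht

/-- `F` increases in `s` on `(0, t]`. The bound on `t` is needed: at `s = t` the derivative changes
sign near `t = 0.418`. -/
theorem F_mono {t : ℝ} (ht : t ≤ 2 / 5) : MonotoneOn (fun s => F s t) (Set.Ioc 0 t) := by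
  have key : ∀ s ∈ Set.Ioc (0:ℝ) t, ∃ d, 0 ≤ d ∧ HasDerivAt (fun s => F s t) d s := by
    rintro s ⟨s0, st⟩
    have h1 : 0 < 1 - s := by linarith
    have h2 : 0 < 1 - s * t := by nlinarith
    have h3 : 0 < 1 - t := by linarith
    have hL : HasDerivAt (fun s => Real.log (1 - s * t) - Real.log (1 - s))
        (-t / (1 - s * t) - -1 / (1 - s)) s := by
      have := ((((hasDerivAt_id s).mul_const t).const_sub 1).log h2.ne').sub
        (((hasDerivAt_id s).const_sub 1).log h1.ne')
      exact this.congr_deriv (by simp)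
    have hD : HasDerivAt (fun s => 1 / (1 - s) - 1 / (1 - s * t))
        (1 / (1 - s) ^ 2 - t / (1 - s * t) ^ 2) s := by
      have := (((hasDerivAt_id s).const_sub 1).inv h1.ne').sub
        ((((hasDerivAt_id s).mul_const t).const_sub 1).inv h2.ne')
      simp only [one_div]
      exact this.congr_deriv (by simp)
    have hdp := D_pos s0 (by linarith) (by linarith : t < 1)
    refine ⟨_, ?_, quot_deriv hL hD hdp⟩
    have hl0 : 0 ≤ Real.log (1 - s * t) - Real.log (1 - s) :=
      sub_nonneg.2 (Real.log_le_log h1 (by nlinarith))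
    have hl : Real.log (1 - s * t) - Real.log (1 - s) ≤
        s * (1 - t) * (2 - s - s * t) / (2 * ((1 - s) * (1 - s * t))) := by
      rw [← Real.log_div h2.ne' h1.ne']
      refine (L_bound (by rw [one_le_div h1]; nlinarith)).trans (le_of_eq ?_)
      field_simp
      ring
    have hP := poly_ineq s0 st ht
    have hc : 0 < 1 - s ^ 2 * t := by nlinarith
    rw [D_eq h1 h2]
    rw [D_eq h1 h2] at hdp
    set L := Real.log (1 - s * t) - Real.log (1 - s)
    apply div_nonneg _ (by positivity)
    apply mul_nonneg (by positivity)
    have e : 2 * (-t / (1 - s * t) - -1 / (1 - s)) *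
          (s * (1 - t) / ((1 - s) * (1 - s * t)) * (1 + 2 * (s * (1 - t) / ((1 - s) * (1 - s * t))))) -
        L * ((1 / (1 - s) ^ 2 - t / (1 - s * t) ^ 2) *
          (1 + 4 * (s * (1 - t) / ((1 - s) * (1 - s * t)))))
        = (1 - t) / ((1 - s) * (1 - s * t)) ^ 3 *
          (2 * s * (1 - t) * ((1 - s) * (1 - s * t) + 2 * (s * (1 - t))) -
            L * (((1 - s) * (1 - s * t) + 4 * (s * (1 - t))) * (1 - s ^ 2 * t))) := by
      have e1 : -t / (1 - s * t) - -1 / (1 - s) = (1 - t) / ((1 - s) * (1 - s * t)) := by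
        rw [div_sub_div _ _ h2.ne' h1.ne', mul_comm (1 - s) (1 - s * t)]
        congr 1
        ring
      have e2 : 1 / (1 - s) ^ 2 - t / (1 - s * t) ^ 2 =
          (1 - t) * (1 - s ^ 2 * t) / ((1 - s) * (1 - s * t)) ^ 2 := by
        field_simp
        ring
      rw [e1, e2]
      have hN : (1 - s) * (1 - s * t) ≠ 0 := by positivity
      generalize (1 - s) * (1 - s * t) = N at hN ⊢
      field_simp
    rw [e]
    apply mul_nonneg (by positivity)
    rw [sub_nonneg]
    calc _ ≤ s * (1 - t) * (2 - s - s * t) / (2 * ((1 - s) * (1 - s * t))) *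
            (((1 - s) * (1 - s * t) + 4 * (s * (1 - t))) * (1 - s ^ 2 * t)) := by gcongr
      _ = s * (1 - t) / (2 * ((1 - s) * (1 - s * t))) * ((2 - s - s * t) *
            ((1 - s) * (1 - s * t) + 4 * (s * (1 - t))) * (1 - s ^ 2 * t)) := by ring
      _ ≤ s * (1 - t) / (2 * ((1 - s) * (1 - s * t))) * (4 * ((1 - s) * (1 - s * t)) *
            ((1 - s) * (1 - s * t) + 2 * (s * (1 - t)))) := by gcongr
      _ = _ := by field_simp; ring
  choose! d hd hd' using key
  apply monotoneOn_of_deriv_nonneg (convex_Ioc 0 t)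
  · exact fun s hs => (hd' s hs).continuousAt.continuousWithinAt
  · exact fun s hs => (hd' s (interior_subset hs)).differentiableAt.differentiableWithinAt
  · exact fun s hs => (hd' s (interior_subset hs)).deriv ▸ hd s (interior_subset hs)

/-- Compare both sides with the diagonal value `F t t`. -/
theorem F_swap_le {s t : ℝ} (hs : 0 < s) (hst : s ≤ t) (ht : t ≤ 2 / 5) : F s t ≤ F t s :=
  (F_mono ht ⟨hs, hst⟩ ⟨hs.trans_le hst, le_rfl⟩ hst).trans
    (F_anti (hs.trans_le hst) (by linarith) ⟨hs, by linarith⟩ ⟨hs.trans_le hst, by linarith⟩ hst)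

/-- The weight of an edge is the rate based at the endpoint of smaller modulus. -/
theorem W_eq {a b : ℝ} (ha : a ≠ 0) (hab : |a| ≤ |b|) (hb : b ^ 2 ≤ 2 / 5) :
    W a b = F (a ^ 2) (b ^ 2) ∧ W b a = F (a ^ 2) (b ^ 2) := by
  have h := sq_le_sq.2 hab
  have ha0 : 0 < a ^ 2 := by positivity
  have e1 := Jt_eq (a := a) (b := b) (by linarith) (by linarith)
  have e2 := Jt_eq (a := b) (b := a) (by linarith) (by linarith)
  have := F_swap_le ha0 h hb
  unfold W
  rw [e1, mul_comm a b, e2, mul_comm b a, e1]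
  exact ⟨min_eq_left this, min_eq_right this⟩

/-- If |ρ₁| ≥ … ≥ |ρ_{d−1}| and |ρ₁| ≤ ρcrit = 0.63055, then for all indices i, j:
if j ≥ i+1 then W(ρ_i, ρ_j) ≤ W(ρ_i, ρ_{i+1}), and
if j ≤ i−1 then W(ρ_i, ρ_j) ≤ W(ρ_i, ρ_{i−1}). -/
theorem W_sorted_neighbors (n : ℕ) (hn : 1 ≤ n) (ρ : Fin n → ℝ)
    (hρ : ∀ i, ρ i ∈ Set.Ioo (-1 : ℝ) 1 ∧ ρ i ≠ 0)
    (hsort : ∀ i j : Fin n, i ≤ j → |ρ j| ≤ |ρ i|)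
    (hcrit : |ρ ⟨0, hn⟩| ≤ 0.63055) :
    ∀ i j : Fin n,
      (∀ h : (i : ℕ) + 1 ≤ (j : ℕ),
        W (ρ i) (ρ j) ≤ W (ρ i) (ρ ⟨(i : ℕ) + 1, lt_of_le_of_lt h j.isLt⟩))
      ∧ (∀ _ : (j : ℕ) + 1 ≤ (i : ℕ),
        W (ρ i) (ρ j) ≤ W (ρ i) (ρ ⟨(i : ℕ) - 1, by have := i.isLt; omega⟩)) := by
  have hsq : ∀ i, (ρ i) ^ 2 ≤ 2 / 5 := by
    intro i
    have h := (hsort ⟨0, hn⟩ i (Fin.mk_le_of_le_val (Nat.zero_le _))).trans hcrit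
    rw [← sq_abs]
    -- `0.63055 ^ 2 < 0.3976 < 2 / 5`
    nlinarith [abs_nonneg (ρ i)]
  have hpos : ∀ i, 0 < (ρ i) ^ 2 := fun i => by have := (hρ i).2; positivity
  intro i j
  refine ⟨fun h => ?_, fun h => ?_⟩
  · set k : Fin n := ⟨(i : ℕ) + 1, lt_of_le_of_lt h j.isLt⟩
    have hik : |ρ k| ≤ |ρ i| := hsort i k (Fin.mk_le_mk.2 (Nat.le_succ _))
    have hkj : |ρ j| ≤ |ρ k| := hsort k j (Fin.mk_le_of_le_val h)
    rw [(W_eq (hρ j).2 (hkj.trans hik) (hsq i)).2, (W_eq (hρ k).2 hik (hsq i)).2]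
    exact F_mono (hsq i) ⟨hpos j, sq_le_sq.2 (hkj.trans hik)⟩ ⟨hpos k, sq_le_sq.2 hik⟩
      (sq_le_sq.2 hkj)
  · set k : Fin n := ⟨(i : ℕ) - 1, by have := i.isLt; omega⟩ with hk
    have hik : |ρ i| ≤ |ρ k| := hsort k i (by rw [Fin.le_def, hk]; simp)
    have hkj : |ρ k| ≤ |ρ j| := hsort j k (by rw [Fin.le_def, hk]; simp; omega)
    rw [(W_eq (hρ i).2 (hik.trans hkj) (hsq j)).1, (W_eq (hρ i).2 hik (hsq k)).1]
    exact F_anti (hpos i) (by linarith [hsq i]) ⟨hpos k, by linarith [hsq k]⟩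
      ⟨hpos j, by linarith [hsq j]⟩ (sq_le_sq.2 hkj)
end
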